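/- Let q be a prime power with q ≡ 1 (mod 4), let ζ be a square root of -1 in F_q, let C_5 = {0, 1, -1, ζ, -ζ}, and let χ₄ be a multiplicative character of F_q of order 4 with complex values (extended by χ₄(0) = 0). Then the sum S(4;q,5) = Σ_{γ ∈ F_q \ C_5} Π_{α ∈ C_5} (3 - χ₄(γ - α) - χ₄((γ - α)²) - χ₄((γ - α)³)) is a real number and satisfies S(4;q,5) ≥ 3^5 (q - 49√q - 160). -/

import Mathlib

open Finset

open Polynomial in
/-- The `r`-th coordinate of `X ^ s * Y ^ t` in the basis `1, Y, …, Y ^ (d - 1)` of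
`K[X, Y] / (Y ^ d - f)` over `K[X]`. -/
noncomputable def superellipticCoord {K : Type*} [Field K] (f : K[X]) (d s t r : ℕ) : K[X] :=
  if t % d = r then X ^ s * f ^ (t / d) else 0

section Stepanov

open Polynomial

variable {K : Type*} [Field K] {f : K[X]} {d : ℕ}

lemma superellipticCoord_of_ne {s t r : ℕ} (h : t % d ≠ r) :
    superellipticCoord f d s t r = 0 := if_neg h

lemma superellipticCoord_mod_ne_zero (hf : f ≠ 0) (s t : ℕ) :
    superellipticCoord f d s t (t % d) ≠ 0 := by
  rw [superellipticCoord, if_pos rfl]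
  exact mul_ne_zero (pow_ne_zero _ X_ne_zero) (pow_ne_zero _ hf)

lemma mul_natDegree_superellipticCoord_mod (hf : f ≠ 0) (s t : ℕ) :
    d * (superellipticCoord f d s t (t % d)).natDegree + f.natDegree * (t % d) =
      d * s + f.natDegree * t := by
  rw [superellipticCoord, if_pos rfl, natDegree_mul (pow_ne_zero _ X_ne_zero) (pow_ne_zero _ hf),
    natDegree_X_pow, natDegree_pow]
  conv_rhs => rw [← Nat.div_add_mod t d]
  ring

lemma mul_natDegree_superellipticCoord_le (hf : f ≠ 0) (s t r : ℕ) :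
    d * (superellipticCoord f d s t r).natDegree ≤ d * s + f.natDegree * t := by
  by_cases h : t % d = r
  · subst h
    have := mul_natDegree_superellipticCoord_mod (d := d) hf s t
    omega
  · simp [superellipticCoord_of_ne h]

lemma sum_eval_superellipticCoord (hd : 0 < d) (s t : ℕ) {x y : K} (hxy : y ^ d = f.eval x) :
    ∑ r ∈ range d, (superellipticCoord f d s t r).eval x * y ^ r = x ^ s * y ^ t := by
  rw [Finset.sum_eq_single (t % d)]
  · rw [superellipticCoord, if_pos rfl, eval_mul, eval_pow, eval_pow, eval_X, ← hxy, mul_assoc,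
      ← pow_mul, ← pow_add, Nat.div_add_mod]
  · intro r _ hr
    rw [superellipticCoord_of_ne hr.symm, eval_zero, zero_mul]
  · intro h
    exact absurd (mem_range.2 (Nat.mod_lt _ hd)) h

/-- Monomials with pairwise distinct weights `d * s + deg f * t` are linearly independent in
`K[X, Y] / (Y ^ d - f)`. -/
lemma exists_sum_superellipticCoord_ne_zero (hf : f ≠ 0) (hd : 0 < d) {ι : Type*} [Fintype ι]
    {s t : ι → ℕ} (hinj : Function.Injective fun i => d * s i + f.natDegree * t i)
    {c : ι → K} (hc : c ≠ 0) :
    ∃ r < d, ∑ i, C (c i) * superellipticCoord f d (s i) (t i) r ≠ 0 := by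
  classical
  obtain ⟨i₀, hi₀⟩ := Function.ne_iff.1 hc
  obtain ⟨i, hi, hmax⟩ := Finset.exists_max_image ({i | c i ≠ 0} : Finset ι)
    (fun i => d * s i + f.natDegree * t i) ⟨i₀, by simpa using hi₀⟩
  refine ⟨t i % d, Nat.mod_lt _ hd, fun h => ?_⟩
  have h1 := congrArg (fun p => p.coeff (superellipticCoord f d (s i) (t i) (t i % d)).natDegree) h
  simp only [finsetSum_coeff, coeff_C_mul, coeff_zero] at h1
  rw [Finset.sum_eq_single i] at h1
  · have h2 := superellipticCoord_mod_ne_zero (d := d) hf (s i) (t i)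
    rcases mul_eq_zero.1 h1 with h3 | h3
    · simp at hi; exact hi h3
    · exact h2 (leadingCoeff_eq_zero.1 h3)
  · intro j _ hj
    by_cases hcj : c j = 0
    · simp [hcj]
    by_cases hr : t j % d = t i % d
    · rw [coeff_eq_zero_of_natDegree_lt, mul_zero]
      have h3 := hmax j (by simpa using hcj)
      have h4 : d * s j + f.natDegree * t j ≠ d * s i + f.natDegree * t i := fun h => hj (hinj h)
      have h5 := mul_natDegree_superellipticCoord_mod (d := d) hf (s i) (t i)
      have h6 := mul_natDegree_superellipticCoord_mod (d := d) hf (s j) (t j)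
      rw [hr] at h6
      refine lt_of_mul_lt_mul_left (a := d) ?_ (Nat.zero_le _)
      omega
    · rw [superellipticCoord_of_ne hr, coeff_zero, mul_zero]
  · simp

/-- A nontrivial linear relation between more monomials of weight at most `W` than the dimension
of the space they span. -/
lemma exists_sum_superellipticCoord_eq_zero (hf : f ≠ 0) (hd : 0 < d) {ι : Type*} [Fintype ι]
    {s t : ι → ℕ} {W : ℕ} (hW : ∀ i, d * s i + f.natDegree * t i ≤ W)
    (hcard : W + d < Fintype.card ι) :
    ∃ c : ι → K, c ≠ 0 ∧ ∀ r < d, ∑ i, C (c i) * superellipticCoord f d (s i) (t i) r = 0 := by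
  classical
  let A : Matrix (Fin d × Fin (W / d + 1)) ι K := fun k i =>
    (superellipticCoord f d (s i) (t i) k.1).coeff k.2
  have hker : LinearMap.ker A.mulVecLin ≠ ⊥ := by
    apply LinearMap.ker_ne_bot_of_finrank_lt
    simp only [Module.finrank_fintype_fun_eq_card, Fintype.card_prod, Fintype.card_fin]
    have := Nat.mul_div_le W d
    rw [mul_add, mul_one]
    omega
  obtain ⟨c, hc, hc0⟩ := Submodule.exists_mem_ne_zero_of_ne_bot hker
  refine ⟨c, hc0, fun r hr => ?_⟩
  ext w
  simp only [finsetSum_coeff, coeff_C_mul, coeff_zero]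
  by_cases hw : w < W / d + 1
  · have := congrFun (LinearMap.mem_ker.1 hc) (⟨r, hr⟩, ⟨w, hw⟩)
    rw [Matrix.mulVecLin_apply, Matrix.mulVec, dotProduct] at this
    simpa only [A, mul_comm, Pi.zero_apply] using this
  · refine Finset.sum_eq_zero fun i _ => ?_
    rw [coeff_eq_zero_of_natDegree_lt, mul_zero]
    have h1 := mul_natDegree_superellipticCoord_le (d := d) hf (s i) (t i) r
    have h2 := (Nat.le_div_iff_mul_le hd).2 ((mul_comm _ _).trans_le (h1.trans (hW i)))
    omega

lemma eq_zero_of_forall_sum_pow_eq_zero [Fintype K] (hd : d ∣ Fintype.card K - 1)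
    {g : ℕ → K} {y : K} (hy : y ≠ 0)
    (h : ∀ z : K, z ^ d = y ^ d → ∑ r ∈ range d, g r * z ^ r = 0) : ∀ r < d, g r = 0 := by
  classical
  have hd0 : 0 < d := Nat.pos_of_dvd_of_pos hd (by have := Fintype.one_lt_card (α := K); omega)
  obtain ⟨u, hu⟩ := IsCyclic.exists_generator (α := Kˣ)
  have ho : orderOf u = Fintype.card K - 1 := by
    rw [orderOf_eq_card_of_forall_mem_zpowers hu, Nat.card_eq_fintype_card, Fintype.card_units]
  obtain ⟨e, he⟩ := hd
  have he0 : 0 < e := by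
    rcases Nat.eq_zero_or_pos e with rfl | h
    · have := Fintype.one_lt_card (α := K); omega
    · exact h
  have hprim : IsPrimitiveRoot ((u ^ e : Kˣ) : K) d := by
    rw [IsPrimitiveRoot.coe_units_iff]
    have h1 := IsPrimitiveRoot.orderOf u
    rw [ho] at h1
    exact h1.pow (by rw [he]; positivity) (by rw [he, mul_comm])
  set v : K := ((u ^ e : Kˣ) : K)
  let P : K[X] := ∑ r ∈ range d, C (g r) * X ^ r
  have hP : P = 0 := by
    by_contra hP0
    refine absurd (Polynomial.card_le_degree_of_subset_roots (p := P)
      (Z := (range d).image fun k => v ^ k * y) ?_) ?_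
    · intro z hz
      simp only [Finset.image_val, Multiset.mem_dedup, Multiset.mem_map] at hz
      obtain ⟨k, -, rfl⟩ := hz
      rw [mem_roots hP0, IsRoot.def]
      simp only [P, eval_finsetSum, eval_mul, eval_C, eval_pow, eval_X]
      apply h
      rw [mul_pow, ← pow_mul, mul_comm k, pow_mul, hprim.pow_eq_one, one_pow, one_mul]
    · rw [Finset.card_image_of_injOn, Finset.card_range, not_le]
      · refine (natDegree_lt_iff_degree_lt hP0).2 (mem_degreeLT.1 (Submodule.sum_mem _ ?_))
        intro r hr
        exact mem_degreeLT.2 ((degree_C_mul_X_pow_le r _).trans_lt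
          (by exact_mod_cast mem_range.1 hr))
      · intro a ha b hb hab
        exact hprim.pow_inj (by simpa using ha) (by simpa using hb) (mul_right_cancel₀ hy hab)
  intro r hr
  have := congrArg (fun p => p.coeff r) hP
  simpa [P, finsetSum_coeff, coeff_X_pow, hr] using this

lemma weight_injective {m d : ℕ} (h : m.Coprime d) (I : ℕ) :
    Function.Injective fun k : Fin I × Fin d => d * (k.1 : ℕ) + m * (k.2 : ℕ) := by
  rintro ⟨i, j⟩ ⟨i', j'⟩ hk
  simp only at hk
  have hd : 0 < d := j.pos
  have h1 : m * (j : ℕ) ≡ m * (j' : ℕ) [MOD d] := by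
    have : (d * (i : ℕ) + m * (j : ℕ)) % d = (d * (i' : ℕ) + m * (j' : ℕ)) % d := by rw [hk]
    simpa [Nat.ModEq] using this
  have h2 : (j : ℕ) = j' :=
    (Nat.ModEq.cancel_left_of_coprime (by rw [Nat.gcd_comm]; exact h) h1).eq_of_lt_of_lt j.2 j'.2
  have h3 : (i : ℕ) = i' := by
    rw [h2] at hk
    exact Nat.eq_of_mul_eq_mul_left hd (by omega)
  exact Prod.ext (Fin.ext h3) (Fin.ext h2)

/-- The Stepanov–Bombieri bound for the number of `x` such that `f x` is a nonzero `d`-th power. -/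
theorem mul_card_le_of_forall_exists_pow_eq [Fintype K] {p k : ℕ} [Fact p.Prime] [CharP K p]
    (hK : Fintype.card K = (p ^ k) ^ 2) (hf : f ≠ 0) (hfd : f.natDegree.Coprime d)
    (hd : d ∣ Fintype.card K - 1)
    (hR : (f.natDegree * d + d) * (f.natDegree * d + 2) + 2 * (f.natDegree * d) + 2 + d < p ^ k)
    {T : Finset K} (hT : ∀ x ∈ T, ∃ y : K, y ≠ 0 ∧ y ^ d = f.eval x) :
    d * #T ≤ (p ^ k) ^ 2 + (2 * (f.natDegree * d) + 3) * p ^ k := by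
  classical
  have hd0 : 0 < d := Nat.pos_of_dvd_of_pos hd (by have := Fintype.one_lt_card (α := K); omega)
  set R := p ^ k with hRdef
  set m := f.natDegree with hm
  set c := m * d with hc
  obtain ⟨I, u, hu, hu1, hu2⟩ : ∃ I u, u = d * I ∧ u + c ≤ R ∧ R < u + c + d := by
    refine ⟨(R - c) / d, _, rfl, ?_, ?_⟩
    · have := Nat.mul_div_le (R - c) d
      have : c ≤ R := by nlinarith
      omega
    · have := Nat.lt_mul_div_succ (R - c) hd0
      rw [mul_add, mul_one] at this
      omega
  obtain ⟨J, v, hv, hv1, hv2⟩ : ∃ J v, v = d * J ∧ R + (c + 2) ≤ v ∧ v ≤ R + (c + 2) + d := by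
    refine ⟨(R + (c + 2)) / d + 1, _, rfl, ?_, ?_⟩
    · exact (Nat.lt_mul_div_succ (R + (c + 2)) hd0).le
    · rw [mul_add, mul_one]
      have := Nat.mul_div_le (R + (c + 2)) d
      omega
  have hbox : ∀ (N : ℕ) (k : Fin N × Fin d), d * (k.1 : ℕ) + m * (k.2 : ℕ) + d ≤ d * N + c := by
    rintro N ⟨i, j⟩
    have h1 : d * (i : ℕ) + d ≤ d * N := by
      have := Nat.mul_le_mul_left d i.2
      rwa [Nat.succ_eq_add_one, mul_add, mul_one] at this
    have h2 : m * (j : ℕ) ≤ m * d := Nat.mul_le_mul_left m j.2.le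
    simp only
    omega
  let ι := (Fin I × Fin d) × (Fin J × Fin d)
  obtain ⟨b, hb0, hb⟩ := exists_sum_superellipticCoord_eq_zero (ι := ι) hf hd0
    (s := fun i => R * i.1.1 + i.2.1) (t := fun i => R * i.1.2 + i.2.2) (W := R * (u + c) + v + c)
    (by
      rintro ⟨i, j⟩
      have h1 := hbox I i
      have h2 := hbox J j
      have h3 := Nat.mul_le_mul_left R h1
      rw [← hu] at h3
      rw [← hv] at h2
      simp only
      nlinarith)
    (by
      simp only [ι, Fintype.card_prod, Fintype.card_fin]
      have : I * d * (J * d) = u * v := by rw [hu, hv]; ring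
      rw [this]
      have hu0 : (c + d) * (c + 2) + R * (c + 1) + (c + 2) + c + d + 1 ≤
          u * (c + 2) + (c + d) * (c + 2) := by
        nlinarith
      obtain ⟨u', hu'⟩ : ∃ u', u = u' + 1 := ⟨u - 1, by
        have := Nat.le_mul_of_pos_right (c + d) (Nat.succ_pos (c + 1))
        simp only [Nat.succ_eq_add_one, add_assoc, Nat.reduceAdd] at this hR
        omega⟩
      have huv := Nat.mul_le_mul_left u' hv1
      rw [hu'] at hu0 ⊢
      linarith)
  choose e he using fun i => (bijective_iterateFrobenius (R := K) (p := p) (n := k)).2 (b i)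
  simp only [iterateFrobenius_def, ← hRdef] at he
  have he0 : e ≠ 0 := by
    rintro rfl
    apply hb0
    ext i
    rw [← he i]
    simp [hRdef, (Fact.out : p.Prime).ne_zero]
  obtain ⟨r, hr, hG⟩ := exists_sum_superellipticCoord_ne_zero (ι := ι) hf hd0
    (s := fun i => i.1.1 + R * i.2.1) (t := fun i => i.1.2 + R * i.2.2)
    (by
      rintro ⟨i, j⟩ ⟨i', j'⟩ h
      simp only at h
      have h1 := hbox I i
      have h2 := hbox I i'
      rw [← hu] at h1 h2
      have h3 : (d * (i.1 : ℕ) + m * (i.2 : ℕ)) + R * (d * (j.1 : ℕ) + m * (j.2 : ℕ)) =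
        (d * (i'.1 : ℕ) + m * (i'.2 : ℕ)) + R * (d * (j'.1 : ℕ) + m * (j'.2 : ℕ)) := by
        rw [← hm] at h
        linarith
      have h4 := congrArg (· % R) h3
      have h5 := congrArg (· / R) h3
      have hRpos : 0 < R := by omega
      simp only [Nat.add_mul_mod_self_left, Nat.add_mul_div_left _ _ hRpos] at h4 h5
      rw [Nat.mod_eq_of_lt (by omega), Nat.mod_eq_of_lt (by omega)] at h4
      rw [Nat.div_eq_of_lt (by omega), Nat.div_eq_of_lt (by omega), zero_add, zero_add] at h5
      exact Prod.ext (weight_injective hfd I h4) (weight_injective hfd J h5)) he0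
  set G : ℕ → K[X] := fun r => ∑ i : ι, C (e i) *
    superellipticCoord f d (i.1.1 + R * i.2.1) (i.1.2 + R * i.2.2) r with hGdef
  have hzero : ∀ x y : K, y ^ d = f.eval x → ∑ r ∈ range d, (G r).eval x * y ^ r = 0 := by
    intro x y hxy
    have h1 : ∑ r ∈ range d, (G r).eval x * y ^ r =
        ∑ i : ι, e i * (x ^ ((i.1.1 : ℕ) + R * i.2.1) * y ^ ((i.1.2 : ℕ) + R * i.2.2)) := by
      simp only [hGdef, eval_finsetSum, eval_mul, eval_C, Finset.sum_mul]
      rw [Finset.sum_comm]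
      refine Finset.sum_congr rfl fun i _ => ?_
      rw [← sum_eval_superellipticCoord hd0 _ _ hxy, Finset.mul_sum]
      exact Finset.sum_congr rfl fun _ _ => by ring
    have h2 : ∑ i : ι, b i *
        (x ^ (R * (i.1.1 : ℕ) + i.2.1) * y ^ (R * (i.1.2 : ℕ) + i.2.2)) = 0 := by
      have : ∑ r ∈ range d, (∑ i : ι, C (b i) *
          superellipticCoord f d (R * i.1.1 + i.2.1) (R * i.1.2 + i.2.2) r).eval x * y ^ r = 0 :=
        Finset.sum_eq_zero fun r hr => by rw [hb r (mem_range.1 hr), eval_zero, zero_mul]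
      rw [← this]
      simp only [eval_finsetSum, eval_mul, eval_C, Finset.sum_mul]
      rw [Finset.sum_comm]
      refine Finset.sum_congr rfl fun i _ => ?_
      rw [← sum_eval_superellipticCoord hd0 _ _ hxy, Finset.mul_sum]
      exact Finset.sum_congr rfl fun _ _ => by ring
    have hfrob : ∀ z : K, z ^ (R * R) = z := fun z => by
      rw [← sq, ← hK, FiniteField.pow_card]
    rw [h1]
    refine pow_eq_zero_iff (n := R) (by omega) |>.1 ?_
    rw [hRdef, sum_pow_char_pow, ← h2, ← hRdef]
    refine Finset.sum_congr rfl fun i _ => ?_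
    have h3 : ∀ (z : K) (a a' : ℕ), (z ^ (a + R * a')) ^ R = z ^ (R * a + a') := by
      intro z a a'
      rw [← pow_mul, add_mul, pow_add, pow_add, mul_comm a R]
      congr 1
      rw [mul_right_comm, pow_mul, hfrob]
    rw [mul_pow, mul_pow, he, h3, h3]
  have hroots : #T ≤ (G r).natDegree := by
    refine Polynomial.card_le_degree_of_subset_roots fun x hx => ?_
    obtain ⟨y, hy, hxy⟩ := hT x hx
    rw [mem_roots hG, IsRoot.def]
    exact eq_zero_of_forall_sum_pow_eq_zero hd (g := fun r => (G r).eval x) hy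
      (fun z hz => hzero x z (hz.trans hxy)) r hr
  have hdeg : (G r).natDegree ≤ (R + R * (v + c - d)) / d := by
    refine natDegree_sum_le_of_forall_le _ _ fun i _ => ?_
    refine (natDegree_C_mul_le _ _).trans ?_
    rw [Nat.le_div_iff_mul_le hd0, mul_comm]
    refine (mul_natDegree_superellipticCoord_le hf _ _ _).trans ?_
    have h1 := hbox I i.1
    have h2 := hbox J i.2
    rw [← hu] at h1
    rw [← hv] at h2
    have h3 : d * (i.2.1 : ℕ) + m * (i.2.2 : ℕ) ≤ v + c - d := by omega
    have h4 := Nat.mul_le_mul_left R h3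
    rw [← hm]
    nlinarith
  calc d * #T ≤ d * ((R + R * (v + c - d)) / d) := Nat.mul_le_mul_left d (hroots.trans hdeg)
    _ ≤ R + R * (v + c - d) := Nat.mul_div_le _ _
    _ ≤ R + R * (R + (2 * c + 2)) := by gcongr; omega
    _ = _ := by ring

end Stepanov

section CharacterSum

open Polynomial

variable {K : Type*} [Field K] [Fintype K]

lemma card_units_le_mul_card_image_pow [DecidableEq K] {d : ℕ} (hd : 0 < d) :
    Fintype.card Kˣ ≤ d * #(univ.image fun y : Kˣ => y ^ d) := by
  classical
  rw [← Finset.card_univ]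
  refine Finset.card_le_mul_card_image _ d fun b _ => ?_
  calc #{y : Kˣ | y ^ d = b} ≤ #(nthRoots d (b : K)).toFinset := by
        refine Finset.card_le_card_of_injOn (fun y => (y : K)) (fun y hy => ?_)
          (fun _ _ _ _ h => Units.ext h)
        have hy : y ^ d = b := by simpa using hy
        simp [mem_nthRoots hd, ← hy]
    _ ≤ Multiset.card (nthRoots d (b : K)) := Multiset.toFinset_card_le _
    _ ≤ d := card_nthRoots d _

lemma norm_mulChar_apply_le_one (ψ : MulChar K ℂ) (a : K) : ‖ψ a‖ ≤ 1 := by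
  rcases eq_or_ne a 0 with rfl | ha
  · simp [MulChar.map_zero]
  · refine (Complex.norm_eq_one_of_pow_eq_one (n := Fintype.card K - 1) ?_ ?_).le
    · rw [← map_pow, FiniteField.pow_card_sub_one_eq_one a ha, map_one]
    · have := Fintype.one_lt_card (α := K)
      omega

lemma sum_units_mulChar_inv_ite [DecidableEq K] {d : ℕ} {ψ : MulChar K ℂ} (hψd : ψ ^ d = 1)
    (z : K) :
    ∑ c : Kˣ, ψ (c⁻¹ : Kˣ) * (if ∃ y : Kˣ, (y : K) ^ d = c * z then 1 else 0) =
      #(univ.image fun y : Kˣ => y ^ d) * ψ z := by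
  rcases eq_or_ne z 0 with rfl | hz
  · simp [MulChar.map_zero]
  have hone : ∀ y : Kˣ, ψ ((y ^ d : Kˣ) : K) = 1 := fun y => by
    rw [Units.val_pow_eq_pow_val, map_pow, ← MulChar.pow_apply_coe, hψd, MulChar.one_apply_coe]
  obtain ⟨w, rfl⟩ : ∃ w : Kˣ, (w : K) = z := ⟨Units.mk0 z hz, rfl⟩
  rw [← Equiv.sum_comp (Equiv.mulRight w⁻¹)]
  have hiff : ∀ c : Kˣ, (∃ y : Kˣ, (y : K) ^ d = (Equiv.mulRight w⁻¹ c : Kˣ) * w) ↔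
      c ∈ univ.image fun y : Kˣ => y ^ d := fun c => by
    simp [Units.ext_iff]
  simp only [hiff, mul_ite, mul_one, mul_zero]
  rw [← Finset.sum_filter, Finset.card_eq_sum_ones, Nat.cast_sum, Finset.sum_mul]
  refine Finset.sum_congr ?_ fun c hc => ?_
  · simp
  · obtain ⟨y, -, rfl⟩ := mem_image.1 hc
    rw [Equiv.coe_mulRight, mul_inv, inv_inv, ← inv_pow, Units.val_mul, map_mul, hone, one_mul,
      Nat.cast_one, one_mul]

lemma sum_units_ite [DecidableEq K] {d : ℕ} {z : K} (hz : z ≠ 0) :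
    ∑ c : Kˣ, (if ∃ y : Kˣ, (y : K) ^ d = c * z then 1 else 0) =
      #(univ.image fun y : Kˣ => y ^ d) := by
  obtain ⟨w, rfl⟩ : ∃ w : Kˣ, (w : K) = z := ⟨Units.mk0 z hz, rfl⟩
  rw [← Equiv.sum_comp (Equiv.mulRight w⁻¹), ← Finset.card_filter]
  congr 1
  ext c
  simp [Units.ext_iff]

theorem norm_sum_mulChar_eval_le {p k d : ℕ} [Fact p.Prime] [CharP K p]
    (hK : Fintype.card K = (p ^ k) ^ 2) {f : K[X]} (hf : f ≠ 0) (hfd : f.natDegree.Coprime d)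
    (hd : d ∣ Fintype.card K - 1)
    (hR : (f.natDegree * d + d) * (f.natDegree * d + 2) + 2 * (f.natDegree * d) + 2 + d < p ^ k)
    {ψ : MulChar K ℂ} (hψ : ψ ≠ 1) (hψd : ψ ^ d = 1) :
    ‖∑ x, ψ (f.eval x)‖ ≤ (2 * (f.natDegree * d) + 3) * (p : ℝ) ^ k + f.natDegree := by
  classical
  have hd0 : 0 < d := Nat.pos_of_dvd_of_pos hd (by have := Fintype.one_lt_card (α := K); omega)
  set m := f.natDegree
  set h : ℕ := #(univ.image fun y : Kˣ => y ^ d) with hh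
  have hcardh := card_units_le_mul_card_image_pow (K := K) hd0
  rw [← hh] at hcardh
  have hh0 : 0 < h := by
    have : 0 < Fintype.card Kˣ := Fintype.card_pos
    exact Nat.pos_of_mul_pos_left (this.trans_le hcardh)
  let T : Kˣ → Finset K := fun c => {x | ∃ y : Kˣ, (y : K) ^ d = c * f.eval x}
  set B : ℝ := ((p : ℝ) ^ k) ^ 2 + (2 * (m * d) + 3) * (p : ℝ) ^ k with hB
  have hT : ∀ c, d * (#(T c) : ℝ) ≤ B := by
    intro c
    have hcf : (C (c : K) * f).natDegree = m := natDegree_C_mul c.ne_zero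
    have := mul_card_le_of_forall_exists_pow_eq (f := C (c : K) * f) (d := d) hK
      (mul_ne_zero (by simp) hf) (by rwa [hcf]) hd (by rwa [hcf]) (T := T c) (by
        intro x hx
        obtain ⟨y, hy⟩ := (mem_filter.1 hx).2
        exact ⟨y, y.ne_zero, by simp [hy]⟩)
    rw [hcf] at this
    rw [hB]
    exact_mod_cast this
  have hTcard : ∀ c, (#(T c) : ℝ) =
      ∑ x, if ∃ y : Kˣ, (y : K) ^ d = c * f.eval x then (1 : ℝ) else 0 := by
    intro c
    rw [Finset.card_filter]
    push_cast
    rfl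
  have hsumT : (h : ℝ) * (((p : ℝ) ^ k) ^ 2 - m) ≤ ∑ c, (#(T c) : ℝ) := by
    simp only [hTcard]
    rw [Finset.sum_comm]
    have hroots : (((p : ℝ) ^ k) ^ 2 - m) ≤ #({x | f.eval x ≠ 0} : Finset K) := by
      have h1 := Finset.card_filter_add_card_filter_not (s := (univ : Finset K))
        (fun x => f.eval x ≠ 0)
      have h2 : #({x | ¬ f.eval x ≠ 0} : Finset K) ≤ m := by
        refine Polynomial.card_le_degree_of_subset_roots fun x hx => ?_
        rw [mem_roots hf]
        simpa using hx
      rw [Finset.card_univ, hK] at h1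
      have h3 : (p ^ k) ^ 2 ≤ #({x | f.eval x ≠ 0} : Finset K) + m := by omega
      have h4 : (((p : ℝ) ^ k) ^ 2) ≤ #({x | f.eval x ≠ 0} : Finset K) + m := by exact_mod_cast h3
      linarith
    calc (h : ℝ) * (((p : ℝ) ^ k) ^ 2 - m) ≤ h * #({x | f.eval x ≠ 0} : Finset K) := by gcongr
      _ = ∑ x ∈ ({x | f.eval x ≠ 0} : Finset K), (h : ℝ) := by
        rw [Finset.sum_const, nsmul_eq_mul, mul_comm]
      _ = ∑ x ∈ ({x | f.eval x ≠ 0} : Finset K),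
          ∑ c : Kˣ, (if ∃ y : Kˣ, (y : K) ^ d = c * f.eval x then (1 : ℝ) else 0) := by
        refine Finset.sum_congr rfl fun x hx => ?_
        rw [hh, ← sum_units_ite (mem_filter.1 hx).2]
        push_cast
        rfl
      _ ≤ _ := by
        refine Finset.sum_le_sum_of_subset_of_nonneg (Finset.filter_subset _ _) fun x _ _ => ?_
        exact Finset.sum_nonneg fun c _ => by split_ifs <;> norm_num
  have hsumψ : ∑ c : Kˣ, ψ (c⁻¹ : Kˣ) = 0 := by
    rw [← Equiv.sum_comp (Equiv.inv Kˣ)]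
    simp only [Equiv.inv_apply, inv_inv]
    have := MulChar.sum_eq_zero_of_ne_one hψ
    rw [← this]
    refine Finset.sum_bij_ne_zero (fun c _ _ => (c : K)) (by simp)
      (by simp [Units.ext_iff]) ?_ (by simp)
    intro b _ hb
    have hb0 : b ≠ 0 := by rintro rfl; exact hb ψ.map_zero
    exact ⟨Units.mk0 b hb0, mem_univ _, hb, rfl⟩
  have hkey : (d : ℂ) * h * ∑ x, ψ (f.eval x) =
      ∑ c : Kˣ, ψ (c⁻¹ : Kˣ) * ((d * #(T c) - B : ℝ) : ℂ) := by
    have h1 : ∑ c : Kˣ, ψ (c⁻¹ : Kˣ) * ((d * #(T c) - B : ℝ) : ℂ) =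
        d * ∑ c : Kˣ, ψ (c⁻¹ : Kˣ) * (#(T c) : ℂ) - (∑ c : Kˣ, ψ (c⁻¹ : Kˣ)) * B := by
      rw [Finset.mul_sum, Finset.sum_mul, ← Finset.sum_sub_distrib]
      refine Finset.sum_congr rfl fun c _ => ?_
      push_cast
      ring
    rw [h1, hsumψ, zero_mul, sub_zero, mul_assoc, Finset.mul_sum]
    congr 1
    simp only [← sum_units_mulChar_inv_ite hψd, hh]
    rw [Finset.sum_comm]
    refine Finset.sum_congr rfl fun c _ => ?_
    rw [← Finset.mul_sum]
    rw [Finset.card_filter]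
    push_cast
    rfl
  have hbound : (d : ℝ) * h * ‖∑ x, ψ (f.eval x)‖ ≤ ∑ c : Kˣ, (B - d * #(T c)) := by
    have h1 := congrArg norm hkey
    rw [norm_mul, norm_mul, Complex.norm_natCast, Complex.norm_natCast] at h1
    rw [h1]
    refine (norm_sum_le _ _).trans (Finset.sum_le_sum fun c _ => ?_)
    rw [norm_mul, Complex.norm_real, Real.norm_eq_abs, abs_of_nonpos (by linarith [hT c])]
    have hψn : ‖ψ (c⁻¹ : Kˣ)‖ ≤ 1 := norm_mulChar_apply_le_one ψ _
    nlinarith [hT c, norm_nonneg (ψ (c⁻¹ : Kˣ))]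
  rw [Finset.sum_sub_distrib, Finset.sum_const, Finset.card_univ, nsmul_eq_mul, ← Finset.mul_sum]
    at hbound
  have hB0 : 0 ≤ B := by positivity
  have h1 : (Fintype.card Kˣ : ℝ) * B ≤ d * h * B := by
    gcongr
    exact_mod_cast hcardh
  have h2 : (d : ℝ) * h * ‖∑ x, ψ (f.eval x)‖ ≤ d * h * (B - (((p : ℝ) ^ k) ^ 2 - m)) := by
    have : (d : ℝ) * (h * (((p : ℝ) ^ k) ^ 2 - m)) ≤ d * ∑ c, (#(T c) : ℝ) := by gcongr
    linarith
  have h3 := le_of_mul_le_mul_left h2 (by positivity)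
  linarith

end CharacterSum

section FieldCharpoly

open Polynomial Module

variable (F : Type*) {K : Type*} [Field F] [Field K] [Algebra F K]

/-- The characteristic polynomial of multiplication by `x` in a finite extension `K / F`, as a
power of the minimal polynomial. -/
noncomputable def fieldCharpoly (x : K) : F[X] :=
  minpoly F x ^ (finrank F K / (minpoly F x).natDegree)

/-- In a finite extension of finite fields whose degree is a multiple of `deg P`, the irreducible
polynomial `P` has `deg P` roots. -/
lemma card_filter_minpoly_eq [Finite F] [Fintype K] {P : F[X]} (hP : Irreducible P) (hPm : P.Monic)
    (hdvd : P.natDegree ∣ finrank F K) [DecidablePred fun x : K => minpoly F x = P] :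
    #{x : K | minpoly F x = P} = P.natDegree := by
  classical
  have : Fact (Irreducible P) := ⟨hP⟩
  have hsep : P.Separable := PerfectField.separable_of_irreducible hP
  have hfin : finrank F (AdjoinRoot P) = P.natDegree := by
    rw [(AdjoinRoot.powerBasis hP.ne_zero).finrank, AdjoinRoot.powerBasis_dim]
  obtain ⟨φ⟩ := FiniteField.nonempty_algHom_of_finrank_dvd (F := F) (K := AdjoinRoot P) (L := K)
    (by rwa [hfin])
  have hroot : aeval (φ (AdjoinRoot.root P)) P = 0 := by
    rw [aeval_algHom_apply, AdjoinRoot.aeval_eq, AdjoinRoot.mk_self, map_zero]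
  have hsplit : (P.map (algebraMap F K)).Splits := by
    rw [minpoly.eq_of_irreducible_of_monic hP hroot hPm]
    exact Normal.splits inferInstance _
  rw [← card_rootSet_eq_natDegree hsep hsplit, ← Set.toFinset_card]
  congr 1
  ext x
  simp only [mem_filter, mem_univ, true_and, Set.mem_toFinset, mem_rootSet_of_ne hP.ne_zero]
  exact ⟨fun h => h ▸ minpoly.aeval F x,
    fun h => (minpoly.eq_of_irreducible_of_monic hP h hPm).symm⟩

variable [FiniteDimensional F K]

lemma natDegree_minpoly_mul_div (x : K) :
    (minpoly F x).natDegree * (finrank F K / (minpoly F x).natDegree) = finrank F K := by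
  rw [← IntermediateField.adjoin.finrank (Algebra.IsIntegral.isIntegral x)]
  exact Nat.mul_div_cancel' ⟨_, (finrank_mul_finrank F _ K).symm⟩

lemma fieldCharpoly_monic (x : K) : (fieldCharpoly F x).Monic :=
  (minpoly.monic (Algebra.IsIntegral.isIntegral x)).pow _

lemma natDegree_fieldCharpoly (x : K) : (fieldCharpoly F x).natDegree = finrank F K := by
  rw [fieldCharpoly, natDegree_pow, mul_comm, natDegree_minpoly_mul_div]

lemma eval_fieldCharpoly (x : K) (a : F) :
    (fieldCharpoly F x).eval a = Algebra.norm F (algebraMap F K a - x) := by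
  set y := x - algebraMap F K a with hy
  have hmin : minpoly F y = (minpoly F x).comp (X + C a) := minpoly.sub_algebraMap x a
  have hdeg : (minpoly F y).natDegree = (minpoly F x).natDegree := by
    rw [hmin, natDegree_comp, natDegree_X_add_C, mul_one]
  have hint : IsIntegral F y := Algebra.IsIntegral.isIntegral y
  have hfin : finrank (IntermediateField.adjoin F {y}) K =
      finrank F K / (minpoly F x).natDegree := by
    rw [← hdeg, ← IntermediateField.adjoin.finrank hint,
      ← finrank_mul_finrank F (IntermediateField.adjoin F {y}) K,
      Nat.mul_div_cancel_left _ finrank_pos]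
  have h1 : algebraMap F K a - x = algebraMap F K (-1) * y := by simp [hy]
  have h2 := Algebra.PowerBasis.norm_gen_eq_coeff_zero_minpoly
    (IntermediateField.adjoin.powerBasis hint)
  rw [IntermediateField.adjoin.powerBasis_gen, IntermediateField.adjoin.powerBasis_dim,
    IntermediateField.minpoly_gen] at h2
  have h3 : (minpoly F y).coeff 0 = (minpoly F x).eval a := by
    rw [hmin, coeff_zero_eq_eval_zero, eval_comp]
    simp
  rw [h1, map_mul, Algebra.norm_algebraMap, Algebra.norm_eq_norm_adjoin F y, h2, h3, hfin, hdeg,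
    mul_pow, ← pow_mul, natDegree_minpoly_mul_div, ← mul_assoc, ← mul_pow, fieldCharpoly, eval_pow]
  simp

end FieldCharpoly

section Counting

open Polynomial Module

variable {F : Type*} [Field F]

lemma pow_dvd_mul_and_not_pow_dvd_iff {P g₀ Q : F[X]} {v e : ℕ} (hP : Irreducible P)
    (hg₀ : ¬ P ∣ g₀) (hQ : Irreducible Q) (hPm : P.Monic) (hQm : Q.Monic) :
    Q ^ e ∣ P * (P ^ v * g₀) ∧ ¬ Q ^ e ∣ P ^ v * g₀ ↔ Q = P ∧ e = v + 1 := by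
  by_cases hQP : Q = P
  · subst hQP
    have key : ∀ w, Q ^ e ∣ Q ^ w * g₀ ↔ e ≤ w := fun w => by
      refine ⟨fun h => ?_, fun h => (pow_dvd_pow Q h).trans (dvd_mul_right _ _)⟩
      by_contra! hlt
      have h1 : Q ^ (w + 1) ∣ Q ^ w * g₀ := (pow_dvd_pow Q hlt).trans h
      rw [pow_succ] at h1
      exact hg₀ ((mul_dvd_mul_iff_left (pow_ne_zero w hP.ne_zero)).1 h1)
    rw [← mul_assoc, ← pow_succ', key, key]
    simp only [true_and]
    omega
  · have hcop : IsCoprime (Q ^ e) P := by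
      refine IsCoprime.pow_left ((hQ.coprime_iff_not_dvd).2 fun h => hQP ?_)
      exact eq_of_monic_of_associated hQm hPm (hQ.associated_of_dvd hP h)
    simp only [hQP, false_and, iff_false, not_and, not_not]
    exact hcop.dvd_of_dvd_mul_left

/-- Summing over extensions of degree `j + 1`, the number of elements whose characteristic
polynomial divides `g` is the degree of `g`. -/
theorem sum_card_filter_fieldCharpoly_dvd [Finite F] (E : ℕ → Type*) [∀ j, Field (E j)]
    [∀ j, Algebra F (E j)] [∀ j, Fintype (E j)]
    (hE : ∀ j, finrank F (E j) = j + 1)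
    [∀ j (g : F[X]), DecidablePred fun x : E j => fieldCharpoly F x ∣ g]
    {g : F[X]} (hg : g ≠ 0) {n : ℕ} (hn : g.natDegree ≤ n) :
    ∑ j ∈ range n, #{x : E j | fieldCharpoly F x ∣ g} = g.natDegree := by
  classical
  have hfd : ∀ j, FiniteDimensional F (E j) := fun j =>
    Module.finite_of_finrank_pos (by rw [hE]; omega)
  induction g using UniqueFactorizationMonoid.induction_on_prime with
  | h₁ => exact absurd rfl hg
  | h₂ g hu =>
    rw [natDegree_eq_zero_of_isUnit hu]
    refine Finset.sum_eq_zero fun j _ => Finset.card_eq_zero.2 (Finset.filter_eq_empty_iff.2 ?_)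
    intro x _ hx
    have h1 := natDegree_eq_zero_of_isUnit (isUnit_of_dvd_unit hx hu)
    rw [natDegree_fieldCharpoly, hE] at h1
    omega
  | h₃ g P₁ hg0 hP₁ ih =>
    have hassoc := associated_normalize P₁
    set P := normalize P₁ with hPdef
    have hPm : P.Monic := monic_normalize hP₁.ne_zero
    have hP : Irreducible P := hassoc.irreducible hP₁.irreducible
    have hdegP : P₁.natDegree = P.natDegree := natDegree_eq_of_degree_eq (degree_normalize).symm
    rw [natDegree_mul hP₁.ne_zero hg0, hdegP] at hn ⊢
    obtain ⟨v, g₀, hg₀, hgv⟩ := WfDvdMonoid.max_power_factor hg0 hP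
    have hv : v * P.natDegree ≤ g.natDegree := by
      rw [← natDegree_pow]
      exact natDegree_le_of_dvd ⟨g₀, hgv⟩ hg0
    have hPpos : 0 < P.natDegree := hP.natDegree_pos
    have hsplit : ∀ j, #{x : E j | fieldCharpoly F x ∣ P₁ * g} =
        #{x : E j | fieldCharpoly F x ∣ g} +
          if j + 1 = (v + 1) * P.natDegree then P.natDegree else 0 := by
      intro j
      have h1 : ∀ x : E j, fieldCharpoly F x ∣ P₁ * g ∧ ¬ fieldCharpoly F x ∣ g ↔
          minpoly F x = P ∧ j + 1 = (v + 1) * P.natDegree := by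
        intro x
        have hint : IsIntegral F x := Algebra.IsIntegral.isIntegral x
        have h2 := pow_dvd_mul_and_not_pow_dvd_iff (v := v) (Q := minpoly F x)
          (e := finrank F (E j) / (minpoly F x).natDegree) hP hg₀ (minpoly.irreducible hint) hPm
          (minpoly.monic hint)
        rw [(hassoc.mul_right g).dvd_iff_dvd_right, hgv, fieldCharpoly, h2]
        refine and_congr_right fun hx => ?_
        have h3 := natDegree_minpoly_mul_div F x
        rw [hE, hx] at h3
        rw [hE, hx, ← h3, mul_comm]
        rw [Nat.mul_div_cancel _ hPpos]
        exact (Nat.mul_left_inj hPpos.ne').symm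
      rw [← Finset.card_filter_add_card_filter_not (s := {x : E j | fieldCharpoly F x ∣ P₁ * g})
        (fun x => fieldCharpoly F x ∣ g), Finset.filter_filter, Finset.filter_filter]
      congr 1
      · congr 1
        ext x
        simp only [mem_filter, mem_univ, true_and, and_iff_right_iff_imp]
        exact fun h => h.mul_left _
      · simp only [h1]
        split_ifs with hj
        · simp only [hj, and_true]
          exact card_filter_minpoly_eq F hP hPm (by rw [hE, hj]; exact dvd_mul_left _ _)
        · simp [hj]
    have hmem : (v + 1) * P.natDegree - 1 ∈ range n := by
      rw [mem_range, add_mul, one_mul]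
      omega
    rw [Finset.sum_congr rfl fun j _ => hsplit j, Finset.sum_add_distrib, ih hg0 (by omega),
      Finset.sum_eq_single_of_mem _ hmem, if_pos, add_comm]
    · have : 0 < (v + 1) * P.natDegree := by positivity
      omega
    · intro j _ hj
      rw [if_neg]
      omega

end Counting

section LFunction

open Polynomial Module

variable {F : Type*} [Field F]

variable {ι : Type*} [Fintype ι]

/-- The completely multiplicative function `g ↦ ∏ i, χ i (g (α i))` on polynomials. -/
noncomputable def evalMulChar (α : ι → F) (χ : ι → MulChar F ℂ) : F[X] →* ℂ :=
  ∏ i, (χ i).toMonoidHom.comp (evalRingHom (α i)).toMonoidHom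

lemma evalMulChar_apply (α : ι → F) (χ : ι → MulChar F ℂ) (g : F[X]) :
    evalMulChar α χ g = ∏ i, χ i (g.eval (α i)) := by
  simp [evalMulChar]

variable [Fintype F]

/-- The monic polynomials of degree `n` over a finite field. -/
noncomputable def monicsOfDegree (F : Type*) [Field F] [Fintype F] (n : ℕ) : Finset F[X] :=
  Set.Finite.toFinset (s := {g : F[X] | g.Monic ∧ g.natDegree = n}) <| by
    have : Finite (degreeLT F n) := Module.finite_of_finite F
    refine ((Set.finite_range fun p : degreeLT F n => X ^ n + (p : F[X]))).subset ?_
    rintro g ⟨hg, rfl⟩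
    refine ⟨⟨g - X ^ g.natDegree, mem_degreeLT.2 ?_⟩, by simp⟩
    rw [← degree_eq_natDegree hg.ne_zero]
    exact degree_sub_lt_left (by rw [degree_X_pow, degree_eq_natDegree hg.ne_zero]) hg.ne_zero
      (by simp [hg.leadingCoeff])

@[simp] lemma mem_monicsOfDegree {n : ℕ} {g : F[X]} :
    g ∈ monicsOfDegree F n ↔ g.Monic ∧ g.natDegree = n := by
  simp [monicsOfDegree]

lemma monicsOfDegree_zero : monicsOfDegree F 0 = {1} := by
  ext g
  simp only [mem_monicsOfDegree, mem_singleton]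
  exact ⟨fun h => h.1.natDegree_eq_zero.1 h.2, by rintro rfl; simp⟩

/-- The identity `n * c n = ∑ S j * c (n - j)` between the coefficients of the `L`-function of a
completely multiplicative function `h` and its power sums. -/
theorem mul_sum_monicsOfDegree (E : ℕ → Type*) [∀ j, Field (E j)]
    [∀ j, Algebra F (E j)] [∀ j, Fintype (E j)] (hE : ∀ j, finrank F (E j) = j + 1)
    (h : F[X] →* ℂ) (n : ℕ) :
    n * ∑ g ∈ monicsOfDegree F n, h g =
      ∑ j ∈ range n, (∑ x : E j, h (fieldCharpoly F x)) *
        ∑ g ∈ monicsOfDegree F (n - 1 - j), h g := by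
  classical
  have hfd : ∀ j, FiniteDimensional F (E j) := fun j =>
    Module.finite_of_finrank_pos (by rw [hE]; omega)
  have h1 : ∀ j ∈ range n, ∀ x : E j, ∑ g ∈ monicsOfDegree F n,
      (if fieldCharpoly F x ∣ g then h g else 0) =
      h (fieldCharpoly F x) * ∑ g ∈ monicsOfDegree F (n - 1 - j), h g := by
    intro j hj x
    have hj := mem_range.1 hj
    have hx := fieldCharpoly_monic F x
    have hxd : (fieldCharpoly F x).natDegree = j + 1 := by rw [natDegree_fieldCharpoly, hE]
    rw [← Finset.sum_filter, Finset.mul_sum]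
    symm
    refine Finset.sum_bij (fun g _ => fieldCharpoly F x * g) ?_ ?_ ?_ ?_
    · intro g hg
      simp only [mem_monicsOfDegree, mem_filter, dvd_mul_right, and_true] at hg ⊢
      refine ⟨hx.mul hg.1, ?_⟩
      rw [hx.natDegree_mul hg.1]
      omega
    · intro a _ b _ hab
      exact mul_left_cancel₀ hx.ne_zero hab
    · intro g hg
      simp only [mem_monicsOfDegree, mem_filter] at hg
      obtain ⟨⟨hgm, hgd⟩, b, rfl⟩ := hg
      have hb : b.Monic := hx.of_mul_monic_left hgm
      rw [hx.natDegree_mul hb] at hgd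
      exact ⟨b, by simp only [mem_monicsOfDegree]; exact ⟨hb, by omega⟩, rfl⟩
    · intro g _
      rw [map_mul]
  calc (n : ℂ) * ∑ g ∈ monicsOfDegree F n, h g
      = ∑ g ∈ monicsOfDegree F n, ∑ j ∈ range n, ∑ x : E j,
          (if fieldCharpoly F x ∣ g then h g else 0) := by
        rw [Finset.mul_sum]
        refine Finset.sum_congr rfl fun g hg => ?_
        obtain ⟨hgm, hgd⟩ := mem_monicsOfDegree.1 hg
        have h2 := sum_card_filter_fieldCharpoly_dvd E hE hgm.ne_zero hgd.le
        rw [hgd] at h2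
        conv_lhs => rw [← h2]
        rw [Nat.cast_sum, Finset.sum_mul]
        refine Finset.sum_congr rfl fun j _ => ?_
        rw [← Finset.sum_filter, Finset.sum_const, nsmul_eq_mul]
    _ = _ := by
        rw [Finset.sum_comm]
        refine Finset.sum_congr rfl fun j hj => ?_
        rw [Finset.sum_comm, Finset.sum_mul]
        exact Finset.sum_congr rfl fun x _ => h1 j hj x

theorem sum_monicsOfDegree_evalMulChar_eq_zero {α : ι → F} (hα : Function.Injective α)
    {χ : ι → MulChar F ℂ} {i₀ : ι} (hi₀ : χ i₀ ≠ 1) {n : ℕ} (hn : Fintype.card ι ≤ n) :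
    ∑ g ∈ monicsOfDegree F n, evalMulChar α χ g = 0 := by
  classical
  obtain ⟨u, hu⟩ := MulChar.ne_one_iff.1 hi₀
  set L := Lagrange.basis univ α i₀ with hL
  have hLi₀ : L.eval (α i₀) = 1 := Lagrange.eval_basis_self hα.injOn (mem_univ _)
  have hLne : ∀ i, i ≠ i₀ → L.eval (α i) = 0 := fun i hi =>
    Lagrange.eval_basis_of_ne hi.symm (mem_univ _)
  have hLdeg : L.degree < n := by
    rw [hL, Lagrange.degree_basis hα.injOn (mem_univ _), card_univ]
    have : 0 < Fintype.card ι := Fintype.card_pos_iff.2 ⟨i₀⟩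
    exact_mod_cast (by omega : Fintype.card ι - 1 < n)
  let T : F → F[X] → F[X] := fun v g => g + C ((v - 1) * g.eval (α i₀)) * L
  have hTeval : ∀ v g, (T v g).eval (α i₀) = v * g.eval (α i₀) := fun v g => by
    simp only [T, eval_add, eval_mul, eval_C, hLi₀]
    ring
  have hTmem : ∀ v, ∀ g ∈ monicsOfDegree F n, T v g ∈ monicsOfDegree F n := by
    intro v g hg
    rw [mem_monicsOfDegree] at hg ⊢
    have hdeg : (C ((v - 1) * g.eval (α i₀)) * L).degree < g.degree := by
      rw [degree_eq_natDegree hg.1.ne_zero, hg.2]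
      rw [← smul_eq_C_mul]
      exact (degree_smul_le _ _).trans_lt hLdeg
    exact ⟨hg.1.add_of_left hdeg,
      (natDegree_eq_of_degree_eq (degree_add_eq_left_of_degree_lt hdeg)).trans hg.2⟩
  have hTinv : ∀ v w : F, v * w = 1 → ∀ g, T v (T w g) = g := by
    intro v w hvw g
    have h1 := hTeval w g
    simp only [T] at h1 ⊢
    rw [h1, add_assoc, ← add_mul, ← C_add]
    have : (w - 1) * eval (α i₀) g + (v - 1) * (w * eval (α i₀) g) = 0 := by
      linear_combination (eval (α i₀) g) * hvw
    rw [this, C_0, zero_mul, add_zero]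
  have hsum : ∑ g ∈ monicsOfDegree F n, evalMulChar α χ g =
      ∑ g ∈ monicsOfDegree F n, χ i₀ u * evalMulChar α χ g := by
    symm
    refine Finset.sum_bij' (fun g _ => T u g) (fun g _ => T (u⁻¹ : Fˣ) g) (hTmem _) (hTmem _)
      (fun g _ => hTinv _ _ (by simp) g) (fun g _ => hTinv _ _ (by simp) g) ?_
    intro g _
    rw [evalMulChar_apply, evalMulChar_apply, ← Finset.mul_prod_erase _ _ (mem_univ i₀),
      ← Finset.mul_prod_erase _ _ (mem_univ i₀), hTeval, map_mul, mul_assoc]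
    congr 2
    refine Finset.prod_congr rfl fun i hi => ?_
    simp [T, hLne i (ne_of_mem_erase hi)]
  rw [← Finset.mul_sum] at hsum
  by_contra h0
  exact hu (mul_right_cancel₀ h0 (by rw [one_mul]; exact hsum.symm))

end LFunction

section PowerSums

open Polynomial

/-- If the power sums of a finite family of complex numbers are `O(B ^ l)` then each member of the
family has absolute value at most `B`. -/
theorem norm_le_of_norm_sum_pow_le {ι : Type*} [Fintype ι] {z : ι → ℂ} {B C : ℝ} (hB : 0 < B)
    {l₀ : ℕ} (h : ∀ l ≥ l₀, ‖∑ i, z i ^ l‖ ≤ C * B ^ l) (i : ι) : ‖z i‖ ≤ B := by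
  by_contra! hi
  have hu : ∀ i, ∃ u : Circle, z i = ‖z i‖ * (u : ℂ) := fun i =>
    ⟨Circle.exp (z i).arg, by rw [Circle.coe_exp, Complex.norm_mul_exp_arg_mul_I]⟩
  choose u hu using hu
  have hcl := mapClusterPt_one_atTop_pow (u : ι → Circle)
  have hnhds : {v : ι → Circle | ∀ i, 1 / 2 < (v i : ℂ).re} ∈ nhds (1 : ι → Circle) := by
    refine IsOpen.mem_nhds ?_ (fun i => by norm_num)
    simp only [Set.ofPred_forall]
    exact isOpen_iInter_of_finite fun i => isOpen_lt continuous_const (by fun_prop)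
  have hfreq := mapClusterPt_iff_frequently.1 hcl _ hnhds
  have hev : ∀ᶠ l : ℕ in Filter.atTop, 2 * C < (‖z i‖ / B) ^ l :=
    (tendsto_pow_atTop_atTop_of_one_lt ((one_lt_div hB).2 hi)).eventually_gt_atTop _
  obtain ⟨l, hl, hl1, hl2⟩ :=
    (hfreq.and_eventually (hev.and (Filter.eventually_ge_atTop l₀))).exists
  simp only [Set.mem_ofPred_eq, Pi.pow_apply] at hl
  have hre : ∀ j, ‖z j‖ ^ l / 2 ≤ (z j ^ l).re := by
    intro j
    rw [hu j, mul_pow, ← Complex.ofReal_pow, Complex.re_ofReal_mul, ← Circle.coe_pow, ← hu j]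
    have := hl j
    have h0 : 0 ≤ ‖z j‖ ^ l := by positivity
    nlinarith
  have h1 : ‖z i‖ ^ l / 2 ≤ C * B ^ l := by
    calc ‖z i‖ ^ l / 2 ≤ ∑ j, ‖z j‖ ^ l / 2 :=
          Finset.single_le_sum (f := fun j => ‖z j‖ ^ l / 2) (fun j _ => by positivity) (mem_univ i)
      _ ≤ ∑ j, (z j ^ l).re := Finset.sum_le_sum fun j _ => hre j
      _ = (∑ j, z j ^ l).re := (Complex.re_sum _ _).symm
      _ ≤ ‖∑ j, z j ^ l‖ := Complex.re_le_norm _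
      _ ≤ _ := h l hl2
  rw [div_pow, lt_div_iff₀ (by positivity)] at hl1
  linarith

/-- A sequence satisfying Newton's identities with finitely supported coefficients is a sequence of
power sums, up to sign. -/
theorem exists_eq_neg_sum_pow {c S : ℕ → ℂ} {k : ℕ} (hc0 : c 0 = 1)
    (hc : ∀ n, k < n → c n = 0)
    (h : ∀ n : ℕ, n * c n = ∑ j ∈ range n, S j * c (n - 1 - j)) :
    ∃ ω : Fin k → ℂ, ∀ j, S j = -∑ i, ω i ^ (j + 1) := by
  classical
  let P : ℂ[X] := ∑ i ∈ range (k + 1), C (c (k - i)) * X ^ i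
  have hPcoeff : ∀ i ≤ k, P.coeff i = c (k - i) := fun i hi => by
    simp [P, finsetSum_coeff, coeff_X_pow, hi]
  have hPdeg : P.natDegree = k := by
    refine natDegree_eq_of_le_of_coeff_ne_zero ?_
      (by rw [hPcoeff k le_rfl, Nat.sub_self, hc0]; exact one_ne_zero)
    refine natDegree_sum_le_of_forall_le _ _ fun i hi => (natDegree_C_mul_X_pow_le _ _).trans ?_
    exact Nat.lt_succ_iff.1 (mem_range.1 hi)
  have hPlead : P.leadingCoeff = 1 := by
    rw [leadingCoeff, hPdeg, hPcoeff k le_rfl, Nat.sub_self, hc0]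
  have hcard : Multiset.card P.roots = P.natDegree := IsAlgClosed.card_roots_eq_natDegree
  obtain ⟨ω, hω⟩ : ∃ ω : Fin k → ℂ, univ.val.map ω = P.roots := by
    have hlen : P.roots.toList.length = k := by rw [Multiset.length_toList, hcard, hPdeg]
    refine ⟨fun i => P.roots.toList.get (i.cast hlen.symm), ?_⟩
    conv_rhs => rw [← Multiset.coe_toList P.roots]
    rw [Fin.univ_val_map]
    congr 1
    refine List.ext_get (by simp [hlen]) fun n h1 h2 => by simp
  have hesymm : ∀ n, P.roots.esymm n = (-1) ^ n * c n := by
    intro n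
    by_cases hn : n ≤ k
    · have h1 := coeff_eq_esymm_roots_of_card hcard (k := k - n) (by rw [hPdeg]; omega)
      rw [hPdeg, hPlead, hPcoeff _ (Nat.sub_le _ _), Nat.sub_sub_self hn, one_mul] at h1
      rw [h1, ← mul_assoc, ← mul_pow]
      simp
    · rw [hc n (by omega), mul_zero, Multiset.esymm, Multiset.powersetCard_eq_empty _ (by omega)]
      simp
  have hnewton : ∀ n : ℕ, n * c n = ∑ j ∈ range n, (-∑ i, ω i ^ (j + 1)) * c (n - 1 - j) := by
    intro n
    have h1 := congrArg (MvPolynomial.aeval ω) (MvPolynomial.mul_esymm_eq_sum (Fin k) ℂ n)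
    simp only [map_mul, map_sum, map_pow, map_neg, map_one, map_natCast,
      MvPolynomial.aeval_esymm_eq_multiset_esymm, hω, hesymm, MvPolynomial.psum,
      MvPolynomial.aeval_X] at h1
    have h2 : ∑ a ∈ antidiagonal n with a.1 < n, (-1 : ℂ) ^ a.1 * ((-1) ^ a.1 * c a.1) *
        ∑ i, ω i ^ a.2 = ∑ j ∈ range n, (∑ i, ω i ^ (j + 1)) * c (n - 1 - j) := by
      refine Finset.sum_bij' (fun a _ => a.2 - 1) (fun j _ => (n - 1 - j, j + 1)) ?_ ?_ ?_ ?_ ?_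
      · rintro ⟨a, b⟩ hab
        simp only [mem_filter, HasAntidiagonal.mem_antidiagonal, mem_range] at hab ⊢
        omega
      · intro j hj
        simp only [mem_filter, HasAntidiagonal.mem_antidiagonal, mem_range] at hj ⊢
        omega
      · rintro ⟨a, b⟩ hab
        simp only [mem_filter, HasAntidiagonal.mem_antidiagonal] at hab
        simp only [Prod.mk.injEq]
        omega
      · intro j _
        simp
      · rintro ⟨a, b⟩ hab
        simp only [mem_filter, HasAntidiagonal.mem_antidiagonal] at hab
        have hb : b - 1 + 1 = b := by omega
        have ha : n - 1 - (b - 1) = a := by omega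
        simp only [hb, ha]
        rw [← mul_assoc, ← mul_pow, neg_one_mul, neg_neg, one_pow, one_mul, mul_comm]
    rw [h2] at h1
    have h3 : ((-1 : ℂ) ^ n) * (-1) ^ n = 1 := by rw [← mul_pow]; simp
    simp only [neg_mul, Finset.sum_neg_distrib]
    rw [pow_succ] at h1
    linear_combination ((-1) ^ n) * h1 -
      (n * c n + ∑ j ∈ range n, (∑ i, ω i ^ (j + 1)) * c (n - 1 - j)) * h3
  refine ⟨ω, fun j => ?_⟩
  induction j using Nat.strong_induction_on with
  | _ j ih =>
    have h1 := (h (j + 1)).symm.trans (hnewton (j + 1))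
    rw [Finset.sum_range_succ, Finset.sum_range_succ] at h1
    have h2 : j + 1 - 1 - j = 0 := by omega
    rw [h2, hc0, mul_one, mul_one,
      Finset.sum_congr rfl fun i hi => by rw [ih i (mem_range.1 hi)]] at h1
    exact add_left_cancel h1

end PowerSums

section Weil

open Polynomial Module

/-- The lift of a multiplicative character of a finite field along the norm. -/
noncomputable def normMulChar {F : Type*} (E : Type*) [Field F] [Field E] [Algebra F E]
    [FiniteDimensional F E] (χ : MulChar F ℂ) : MulChar E ℂ where
  toMonoidHom := χ.toMonoidHom.comp (Algebra.norm F)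
  map_nonunit' x hx := by
    rw [isUnit_iff_ne_zero, not_not] at hx
    subst hx
    simpa using χ.map_nonunit not_isUnit_zero

variable {F : Type*} [Field F]

section

variable (E : Type*) [Field E] [Algebra F E] [FiniteDimensional F E]

lemma normMulChar_apply (χ : MulChar F ℂ) (x : E) :
    normMulChar E χ x = χ (Algebra.norm F x) := rfl

lemma normMulChar_one : normMulChar E (1 : MulChar F ℂ) = 1 := by
  ext x
  rw [normMulChar_apply, MulChar.one_apply_coe, MulChar.one_apply]
  exact (x.isUnit.map (Algebra.norm F))

lemma normMulChar_pow (χ : MulChar F ℂ) (d : ℕ) : normMulChar E (χ ^ d) = normMulChar E χ ^ d := by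
  ext x
  rw [normMulChar_apply, MulChar.pow_apply_coe, normMulChar_apply]
  have := x.isUnit.map (Algebra.norm F)
  rw [← this.unit_spec, MulChar.pow_apply_coe]

lemma normMulChar_ne_one [Finite E] {χ : MulChar F ℂ} (hχ : χ ≠ 1) : normMulChar E χ ≠ 1 := by
  obtain ⟨a, ha⟩ := MulChar.ne_one_iff.1 hχ
  have : Finite F := Finite.of_injective _ (algebraMap F E).injective
  obtain ⟨x, hx⟩ := FiniteField.norm_surjective F E a
  have hx0 : x ≠ 0 := by
    rintro rfl
    exact a.ne_zero (by simpa using hx.symm)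
  refine MulChar.ne_one_iff.2 ⟨Units.mk0 x hx0, ?_⟩
  rwa [Units.val_mk0, normMulChar_apply, hx]

end

variable {ι : Type*} [Fintype ι]

lemma evalMulChar_fieldCharpoly (E : Type*) [Field E] [Algebra F E] [FiniteDimensional F E]
    (χ : MulChar F ℂ) (α : ι → F) {a : ι → ℕ} (ha : ∀ i, a i ≠ 0) (x : E) :
    evalMulChar α (fun i => χ ^ a i) (fieldCharpoly F x) =
      normMulChar E χ ((∏ i, (C (algebraMap F E (α i)) - X) ^ a i).eval x) := by
  rw [evalMulChar_apply, normMulChar_apply, eval_prod, map_prod, map_prod]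
  refine prod_congr rfl fun i _ => ?_
  rw [MulChar.pow_apply' _ (ha i), eval_fieldCharpoly]
  simp

lemma natDegree_prod_C_sub_X_pow (α : ι → F) (a : ι → ℕ) :
    (∏ i, (C (α i) - X) ^ a i).natDegree = ∑ i, a i := by
  have h (b : F) : C b - X = -(X - C b) := by ring
  rw [natDegree_prod _ _ fun i _ => pow_ne_zero _
    (by rw [h]; exact neg_ne_zero.2 (X_sub_C_ne_zero _))]
  refine sum_congr rfl fun i _ => ?_
  rw [natDegree_pow, h, natDegree_neg, natDegree_X_sub_C, mul_one]

/-- Weil's bound for the character sum of a product of linear factors, when the total degree is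
coprime to the order of the character. -/
theorem norm_sum_prod_mulChar_le_of_coprime_sum [Fintype F] {χ : MulChar F ℂ} (hχ : χ ≠ 1) {d : ℕ}
    (hχd : χ ^ d = 1) (hd : d ∣ Fintype.card F - 1) {α : ι → F} (hα : Function.Injective α)
    {a : ι → ℕ} (ha : ∀ i, a i ≠ 0) (had : (∑ i, a i).Coprime d) :
    ‖∑ x : F, ∏ i, χ (α i - x) ^ a i‖ ≤ (Fintype.card ι - 1 : ℕ) * √(Fintype.card F) := by
  classical
  obtain ⟨p, hp⟩ := CharP.exists F
  obtain ⟨e, hpp, hq⟩ := FiniteField.card F p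
  have : Fact p.Prime := ⟨hpp⟩
  set q := Fintype.card F with hqdef
  let E : ℕ → Type := fun j => FiniteField.Extension F p (j + 1)
  let : ∀ j, Fintype (E j) := fun j => Fintype.ofFinite _
  have hcardE : ∀ j, Fintype.card (E j) = q ^ (j + 1) := fun j => by
    rw [← Nat.card_eq_fintype_card, FiniteField.natCard_extension, Nat.card_eq_fintype_card]
  have hE : ∀ j, finrank F (E j) = j + 1 := fun j => FiniteField.finrank_extension ..
  let h := evalMulChar α (fun i => χ ^ a i)
  let c : ℕ → ℂ := fun n => ∑ g ∈ monicsOfDegree F n, h g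
  let S : ℕ → ℂ := fun j => ∑ x : E j, h (fieldCharpoly F x)
  obtain ⟨i₀, hi₀⟩ : ∃ i, χ ^ a i ≠ 1 := by
    by_contra! hall
    have h1 : orderOf χ ∣ ∑ i, a i := dvd_sum fun i _ => orderOf_dvd_of_pow_eq_one (hall i)
    have h2 : orderOf χ ∣ 1 := by
      rw [← had]
      exact Nat.dvd_gcd h1 (orderOf_dvd_of_pow_eq_one hχd)
    exact hχ (orderOf_eq_one_iff.1 (Nat.dvd_one.1 h2))
  have hι : 0 < Fintype.card ι := Fintype.card_pos_iff.2 ⟨i₀⟩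
  obtain ⟨ω, hω⟩ := exists_eq_neg_sum_pow (c := c) (S := S) (k := Fintype.card ι - 1)
    (by simp [c, monicsOfDegree_zero])
    (fun n hn => sum_monicsOfDegree_evalMulChar_eq_zero hα hi₀ (by omega))
    (mul_sum_monicsOfDegree E hE h)
  set D := ∑ i, a i with hD
  have hq2 : 2 ≤ q := Fintype.one_lt_card
  have hω_le : ∀ i, ‖ω i ^ 2‖ ≤ q := by
    refine norm_le_of_norm_sum_pow_le (by positivity) (C := 2 * (D * d) + 3 + D)
      (l₀ := (D * d + d) * (D * d + 2) + 2 * (D * d) + 2 + d + 1) fun l hl => ?_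
    have hl1 : l - 1 + l + 1 = 2 * l := by omega
    have hS := hω (l - 1 + l)
    simp_rw [hl1, pow_mul] at hS
    rw [← norm_neg, ← hS]
    set j := l - 1 + l
    let f : (E j)[X] := ∏ i, (C (algebraMap F (E j) (α i)) - X) ^ a i
    have hfD : f.natDegree = D := natDegree_prod_C_sub_X_pow _ _
    have : CharP (E j) p := charP_of_injective_algebraMap (algebraMap F (E j)).injective p
    have hqk : p ^ ((e : ℕ) * l) = q ^ l := by rw [hq, pow_mul]
    have hlq : l < q ^ l := Nat.lt_pow_self hq2
    have hf0 : f ≠ 0 := prod_ne_zero_iff.2 fun i _ => pow_ne_zero _ fun h0 => by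
      simpa using congrArg (coeff · 1) h0
    have key := norm_sum_mulChar_eval_le (p := p) (k := e * l) (d := d)
      (by rw [hqk, hcardE, hl1, mul_comm, pow_mul]) hf0 (by rw [hfD]; exact had)
      (by rw [hcardE]; exact hd.trans (by simpa using Nat.sub_dvd_pow_sub_pow q 1 (j + 1)))
      (by rw [hfD, hqk]; omega) (normMulChar_ne_one (E j) hχ)
      (by rw [← normMulChar_pow, hχd, normMulChar_one])
    have hSj : S j = ∑ x : E j, normMulChar (E j) χ (f.eval x) :=
      sum_congr rfl fun x _ => evalMulChar_fieldCharpoly (E j) χ α ha x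
    rw [hSj]
    refine key.trans ?_
    have hqk' : (p : ℝ) ^ ((e : ℕ) * l) = (q : ℝ) ^ l := by exact_mod_cast hqk
    rw [hfD, hqk']
    have h1 : (1 : ℝ) ≤ (q : ℝ) ^ l := one_le_pow₀ (Nat.one_le_cast.2 (by omega))
    have h2 : (D : ℝ) ≤ D * (q : ℝ) ^ l := le_mul_of_one_le_right (Nat.cast_nonneg _) h1
    linarith
  have hS0 : ∑ x : F, ∏ i, χ (α i - x) ^ a i = S 0 := by
    have hbij : Function.Bijective (algebraMap F (E 0)) :=
      ((Fintype.bijective_iff_injective_and_card _).2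
        ⟨(algebraMap F (E 0)).injective, by rw [hcardE, zero_add, pow_one]⟩)
    refine Fintype.sum_bijective _ hbij _ _ fun x => ?_
    rw [evalMulChar_apply]
    refine prod_congr rfl fun i _ => ?_
    rw [MulChar.pow_apply' _ (ha i), eval_fieldCharpoly, ← map_sub, Algebra.norm_algebraMap, hE,
      zero_add, pow_one]
  rw [hS0, hω, norm_neg]
  refine (norm_sum_le _ _).trans ?_
  have : ∀ i, ‖ω i ^ (0 + 1)‖ ≤ √q := fun i => by
    rw [zero_add, pow_one]
    refine Real.le_sqrt_of_sq_le ?_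
    simpa using hω_le i
  simpa using sum_le_sum fun i (_ : i ∈ univ) => this i

end Weil

section WeilMoebius

variable {F : Type*} [Field F] [Fintype F] {ι : Type*} [Fintype ι]

/-- Weil's bound for the character sum of a product of linear factors, when one of the exponents is
coprime to the order of the character. -/
theorem norm_sum_prod_mulChar_le_of_coprime {χ : MulChar F ℂ} (hχ : χ ≠ 1) {d : ℕ}
    (hχd : χ ^ d = 1) (hd : d ∣ Fintype.card F - 1) {α : ι → F} (hα : Function.Injective α)
    {a : ι → ℕ} (ha : ∀ i, a i ≠ 0) {i₀ : ι} (had : (a i₀).Coprime d) :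
    ‖∑ x : F, ∏ i, χ (α i - x) ^ a i‖ ≤ (Fintype.card ι - 1 : ℕ) * √(Fintype.card F) := by
  classical
  set D := ∑ i, a i with hD
  have hd1 : d ≠ 1 := by rintro rfl; exact hχ (by simpa using hχd)
  have hd0 : d ≠ 0 := by
    rintro rfl
    have := Fintype.one_lt_card (α := F)
    have := Nat.eq_zero_of_zero_dvd hd
    omega
  have hsplit (f : ι → ℂ) : ∏ i, f i = f i₀ * ∏ i ∈ univ.erase i₀, f i :=
    (mul_prod_erase _ _ (mem_univ i₀)).symm
  have hD_eq : D = a i₀ + ∑ i ∈ univ.erase i₀, a i := (add_sum_erase _ _ (mem_univ i₀)).symm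
  let δ : ι → F := fun i => α i - α i₀
  let β : ι → F := fun i => -(δ i)⁻¹
  have hδ : ∀ i ≠ i₀, δ i ≠ 0 := fun i hi => sub_ne_zero.2 (hα.ne hi)
  have hβ : Function.Injective β := fun i j hij =>
    hα (sub_left_injective (inv_injective (neg_injective hij)))
  let b : ι → ℕ := Function.update a i₀ ((d - 1) * D)
  have hb₀ : b i₀ = (d - 1) * D := Function.update_self ..
  have hb_ne : ∀ i ≠ i₀, b i = a i := fun i hi => Function.update_of_ne hi ..
  have hb₀' : b i₀ ≠ 0 := by
    rw [hb₀]
    refine mul_ne_zero (by omega) ?_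
    have := ha i₀
    omega
  have hb : ∀ i, b i ≠ 0 := fun i => by
    by_cases hi : i = i₀
    · rwa [hi]
    · rw [hb_ne i hi]
      exact ha i
  have hbsum : ∑ i, b i + a i₀ = d * D := by
    have h1 : ∑ i ∈ univ.erase i₀, b i = ∑ i ∈ univ.erase i₀, a i :=
      sum_congr rfl fun i hi => hb_ne i (ne_of_mem_erase hi)
    have h2 : (d - 1) * D + D = d * D := by
      rw [← Nat.succ_mul, Nat.succ_eq_add_one, Nat.sub_add_cancel (by omega)]
    rw [← add_sum_erase _ _ (mem_univ i₀), h1, hb₀]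
    omega
  have hbd : (∑ i, b i).Coprime d := by
    refine Nat.Coprime.symm (Nat.Coprime.of_dvd_left dvd_rfl ?_)
    have h1 : d.gcd (∑ i, b i) ∣ a i₀ :=
      (Nat.dvd_add_right (Nat.gcd_dvd_right _ _)).1
        (hbsum ▸ (Nat.gcd_dvd_left _ _).mul_right D)
    exact Nat.dvd_one.1 (had ▸ Nat.dvd_gcd h1 (Nat.gcd_dvd_left _ _))
  let c : ℂ := χ (-1) ^ b i₀ * ∏ i ∈ univ.erase i₀, χ (-δ i) ^ a i
  have hc : ‖c‖ ≤ 1 := by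
    have h1 (y : F) (n : ℕ) : ‖χ y ^ n‖ ≤ 1 := by
      rw [norm_pow]
      exact pow_le_one₀ (norm_nonneg _) (norm_mulChar_apply_le_one χ y)
    rw [norm_mul, norm_prod]
    exact mul_le_one₀ (h1 _ _) (prod_nonneg fun _ _ => norm_nonneg _)
      (prod_le_one (fun _ _ => norm_nonneg _) fun _ _ => h1 _ _)
  have hbij : Function.Bijective fun t : F => α i₀ - t⁻¹ :=
    (Equiv.subLeft (α i₀)).bijective.comp inv_involutive.bijective
  have hterm : ∀ t : F, ∏ i, χ (α i - (α i₀ - t⁻¹)) ^ a i = c * ∏ i, χ (β i - t) ^ b i := by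
    intro t
    by_cases ht : t = 0
    · rw [hsplit, hsplit]
      simp [ht, β, δ, ha i₀, hb₀', MulChar.map_zero]
    have hχt : χ t ^ d = 1 := by
      rw [← MulChar.pow_apply' _ hd0, hχd, MulChar.one_apply (isUnit_iff_ne_zero.2 ht)]
    have h1 : ∏ i, χ (α i - (α i₀ - t⁻¹)) ^ a i =
        χ t ^ b i₀ * ∏ i, χ (t * (α i - (α i₀ - t⁻¹))) ^ a i := by
      simp_rw [map_mul, mul_pow, prod_mul_distrib, prod_pow_eq_pow_sum, ← mul_assoc, ← pow_add]
      have h2 : b i₀ + ∑ i, a i = d * D := by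
        rw [hb₀, ← hD, ← Nat.succ_mul, Nat.succ_eq_add_one, Nat.sub_add_cancel (by omega)]
      rw [h2, pow_mul, hχt, one_pow, one_mul]
    rw [h1, hsplit, hsplit fun i => χ (β i - t) ^ b i]
    have h2 : t * (α i₀ - (α i₀ - t⁻¹)) = 1 := by rw [sub_sub_cancel, mul_inv_cancel₀ ht]
    have h3 : ∏ i ∈ univ.erase i₀, χ (t * (α i - (α i₀ - t⁻¹))) ^ a i =
        (∏ i ∈ univ.erase i₀, χ (-δ i) ^ a i) * ∏ i ∈ univ.erase i₀, χ (β i - t) ^ b i := by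
      rw [← prod_mul_distrib]
      refine prod_congr rfl fun i hi => ?_
      have hi := ne_of_mem_erase hi
      rw [hb_ne i hi, ← mul_pow, ← map_mul]
      congr 2
      have := hδ i hi
      simp only [β]
      field_simp
      simp only [δ]
      ring
    have h4 : χ t = χ (-1) * χ (β i₀ - t) := by
      rw [← map_mul]
      simp [β, δ]
    rw [h2, h3, map_one, one_pow, one_mul, h4, mul_pow]
    ring
  rw [← hbij.sum_comp (fun x => ∏ i, χ (α i - x) ^ a i), sum_congr rfl fun t _ => hterm t,
    ← mul_sum, norm_mul]
  exact (mul_le_of_le_one_left (norm_nonneg _) hc).trans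
    (norm_sum_prod_mulChar_le_of_coprime_sum hχ hχd hd hβ hb hbd)

end WeilMoebius

section Quartic

variable {F : Type*} [Field F] {χ : MulChar F ℂ}

lemma exists_ofReal_eq_three_sub_sum_quartic (hχ : orderOf χ = 4) (x : F) :
    ∃ r : ℝ, 3 - ∑ j ∈ Icc 1 3, χ x ^ j = r := by
  rcases eq_or_ne x 0 with rfl | hx
  · exact ⟨3, by simp [sum_Icc_succ_top, MulChar.map_zero]⟩
  have h : χ x ^ 4 = 1 := by
    rw [← MulChar.pow_apply' _ four_ne_zero, ← hχ, pow_orderOf_eq_one,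
      MulChar.one_apply (isUnit_iff_ne_zero.2 hx)]
  have h2 : (χ x - 1) * (χ x ^ 3 + χ x ^ 2 + χ x + 1) = 0 := by linear_combination h
  simp only [sum_Icc_succ_top (show 1 ≤ 3 by norm_num), sum_Icc_succ_top (show 1 ≤ 2 by norm_num),
    Icc_self, sum_singleton, Nat.reduceAdd]
  rcases mul_eq_zero.1 h2 with h3 | h3
  · exact ⟨0, by rw [sub_eq_zero.1 h3]; norm_num⟩
  · exact ⟨4, by push_cast; linear_combination -h3⟩

variable [Fintype F]

lemma four_dvd_card_sub_one (hχ : orderOf χ = 4) : 4 ∣ Fintype.card F - 1 := by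
  classical
  exact Fintype.card_units F ▸ hχ ▸ orderOf_dvd_of_pow_eq_one (MulChar.pow_card_eq_one χ)

/-- Weil's bound for monomials in the translates of a quartic character. -/
lemma norm_sum_prod_quartic_le (hχ : orderOf χ = 4) (A : Finset F) (hA : A.Nonempty)
    {a : A → ℕ} (ha : ∀ i, a i ∈ Icc 1 3) :
    ‖∑ γ, ∏ i : A, χ (γ - i) ^ a i‖ ≤ ((#A : ℝ) - 1) * √(Fintype.card F) := by
  have hA1 : (#A : ℝ) - 1 = (Fintype.card A - 1 : ℕ) := by
    rw [Fintype.card_coe, Nat.cast_sub hA.card_pos, Nat.cast_one]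
  have h4 := four_dvd_card_sub_one hχ
  have hχ1 : χ ≠ 1 := fun h => by simp [h] at hχ
  have hsign : ∀ γ, ∏ i : A, χ (γ - i) ^ a i =
      (∏ i : A, χ (-1) ^ a i) * ∏ i : A, χ (i - γ) ^ a i := fun γ => by
    simp_rw [← prod_mul_distrib, ← mul_pow, ← map_mul, neg_one_mul, neg_sub]
  simp_rw [hsign, ← mul_sum, norm_mul, norm_prod, norm_pow]
  refine (mul_le_of_le_one_left (norm_nonneg _) (prod_le_one (fun _ _ => by positivity)
    fun _ _ => pow_le_one₀ (norm_nonneg _) (norm_mulChar_apply_le_one _ _))).trans ?_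
  rw [hA1]
  by_cases hodd : ∃ i₀, (a i₀).Coprime 4
  · obtain ⟨i₀, hi₀⟩ := hodd
    exact norm_sum_prod_mulChar_le_of_coprime hχ1 (hχ ▸ pow_orderOf_eq_one χ) h4
      Subtype.val_injective (fun i => (by have := mem_Icc.1 (ha i); omega)) hi₀
  · have h2 : ∀ i, a i = 2 := fun i => by
      have h := fun h => hodd ⟨i, h⟩
      have := ha i
      generalize a i = n at *
      fin_cases this <;> simp_all
    have hχ2 : χ ^ 2 ≠ 1 := fun h => by
      have := hχ ▸ orderOf_dvd_of_pow_eq_one h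
      omega
    obtain ⟨i₀⟩ : Nonempty A := hA.coe_sort
    have := norm_sum_prod_mulChar_le_of_coprime (d := 2) (i₀ := i₀) hχ2
      (by rw [← pow_mul, show 2 * 2 = orderOf χ from hχ.symm, pow_orderOf_eq_one])
      ((by norm_num : 2 ∣ 4).trans h4)
      (α := ((↑) : A → F)) Subtype.val_injective (a := fun _ => 1) (fun _ => one_ne_zero)
      (Nat.coprime_one_left 2)
    simpa [h2, MulChar.pow_apply'] using this

variable [DecidableEq F]

lemma norm_sum_sdiff_prod_quartic_le (hχ : orderOf χ = 4) {A T : Finset F} (hA : A.Nonempty)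
    (hAT : A ⊆ T) {a : A → ℕ} (ha : ∀ i, a i ∈ Icc 1 3) :
    ‖∑ γ ∈ univ \ T, ∏ i : A, χ (γ - i) ^ a i‖ ≤
      ((#A : ℝ) - 1) * √(Fintype.card F) + (#T - #A) := by
  have h1 := sum_sdiff (subset_univ T) (f := fun γ => ∏ i : A, χ (γ - i) ^ a i)
  have h2 := sum_sdiff hAT (f := fun γ => ∏ i : A, χ (γ - i) ^ a i)
  have h3 : ∑ γ ∈ A, ∏ i : A, χ (γ - i) ^ a i = 0 := sum_eq_zero fun γ hγ => by
    refine prod_eq_zero (mem_univ ⟨γ, hγ⟩) ?_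
    have := mem_Icc.1 (ha ⟨γ, hγ⟩)
    rw [sub_self, MulChar.map_zero, zero_pow (by omega)]
  rw [h3, add_zero] at h2
  rw [← h2] at h1
  rw [eq_sub_of_add_eq h1]
  refine (norm_sub_le _ _).trans (add_le_add (norm_sum_prod_quartic_le hχ A hA ha) ?_)
  rw [← Nat.cast_sub (card_le_card hAT), ← card_sdiff_of_subset hAT]
  refine (norm_sum_le _ _).trans ((sum_le_card_nsmul _ _ 1 fun γ _ => ?_).trans (by simp))
  rw [norm_prod]
  refine prod_le_one (fun _ _ => norm_nonneg _) fun _ _ => ?_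
  rw [norm_pow]
  exact pow_le_one₀ (norm_nonneg _) (norm_mulChar_apply_le_one _ _)

lemma norm_sum_sdiff_prod_sum_quartic_le (hχ : orderOf χ = 4) {A T : Finset F} (hA : A.Nonempty)
    (hAT : A ⊆ T) :
    ‖∑ γ ∈ univ \ T, ∏ α ∈ A, ∑ j ∈ Icc 1 3, χ (γ - α) ^ j‖ ≤
      3 ^ #A * (((#A : ℝ) - 1) * √(Fintype.card F) + (#T - #A)) := by
  have h1 : ∀ γ, ∏ α ∈ A, ∑ j ∈ Icc 1 3, χ (γ - α) ^ j =
      ∑ a ∈ Fintype.piFinset fun _ : A => Icc 1 3, ∏ i : A, χ (γ - i) ^ a i := fun γ => by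
    rw [← prod_coe_sort, prod_univ_sum]
  simp_rw [h1]
  rw [sum_comm]
  refine (norm_sum_le _ _).trans ((sum_le_card_nsmul _ _ _ fun a ha =>
    norm_sum_sdiff_prod_quartic_le hχ hA hAT (Fintype.mem_piFinset.1 ha)).trans_eq ?_)
  simp [mul_add]

/-- The deviation of `∑ ∏ (3 - χ - χ ^ 2 - χ ^ 3)` from its main term. -/
theorem norm_sum_sdiff_prod_three_sub_quartic_le (hχ : orderOf χ = 4) (T : Finset F) :
    ‖∑ γ ∈ univ \ T, ∏ α ∈ T, (3 - ∑ j ∈ Icc 1 3, χ (γ - α) ^ j) -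
        3 ^ #T * (Fintype.card F - #T)‖ ≤
      3 ^ #T * ∑ A ∈ T.powerset.erase ∅,
        (((#A : ℝ) - 1) * √(Fintype.card F) + (#T - #A)) := by
  have h1 : ∀ γ, ∏ α ∈ T, (3 - ∑ j ∈ Icc 1 3, χ (γ - α) ^ j) =
      ∑ A ∈ T.powerset, (-1) ^ #A * 3 ^ #(T \ A) * ∏ α ∈ A, ∑ j ∈ Icc 1 3, χ (γ - α) ^ j :=
    fun γ => by
      simp_rw [sub_eq_neg_add, prod_add, prod_neg, prod_const]
      exact sum_congr rfl fun A _ => by ring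
  simp_rw [h1]
  rw [sum_comm, ← add_sum_erase _ _ (empty_mem_powerset T)]
  have h2 : ∑ γ ∈ univ \ T, (-1 : ℂ) ^ #(∅ : Finset F) * 3 ^ #(T \ ∅) *
      ∏ α ∈ (∅ : Finset F), ∑ j ∈ Icc 1 3, χ (γ - α) ^ j =
      3 ^ #T * (Fintype.card F - #T) := by
    simp [card_sdiff_of_subset (subset_univ T), Nat.cast_sub (card_le_univ T), mul_comm]
  rw [h2, add_sub_cancel_left, mul_sum]
  refine norm_sum_le_of_le _ fun A hA => ?_
  obtain ⟨hA, hAT⟩ := mem_erase.1 hA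
  have hAT := mem_powerset.1 hAT
  rw [← mul_sum, norm_mul, norm_mul, norm_pow, norm_pow, norm_neg, norm_one, one_pow, one_mul,
    Complex.norm_ofNat]
  refine (mul_le_mul_of_nonneg_left (norm_sum_sdiff_prod_sum_quartic_le hχ
    (nonempty_iff_ne_empty.2 hA) hAT) (by positivity)).trans_eq ?_
  rw [← mul_assoc, ← pow_add, card_sdiff_add_card_eq_card hAT]

end Quartic

/-- For a prime power `q ≡ 1 (mod 4)`, with `C₅ = {0, 1, -1, ζ, -ζ}` where `ζ² = -1`, and a
multiplicative character `χ₄` of order `4`, the character sum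
`S(4; q, 5) = ∑_{γ ∈ F_q \ C₅} ∏_{α ∈ C₅} (3 - χ₄(γ - α) - χ₄((γ - α)²) - χ₄((γ - α)³))`
is real and satisfies `S(4; q, 5) ≥ 3⁵ (q - 49 √q - 160)`. -/
theorem quartic_char_sum_lower_bound
    (q : ℕ) (hq : IsPrimePow q) (hq4 : q % 4 = 1)
    (F : Type*) [Field F] [Fintype F] [DecidableEq F] (hF : Fintype.card F = q)
    (ζ : F) (hζ : ζ ^ 2 = -1)
    (χ : MulChar F ℂ) (hχ : orderOf χ = 4) :
    (∑ γ ∈ univ \ ({0, 1, -1, ζ, -ζ} : Finset F),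
        ∏ α ∈ ({0, 1, -1, ζ, -ζ} : Finset F),
          (3 - χ (γ - α) - χ ((γ - α) ^ 2) - χ ((γ - α) ^ 3))).im = 0 ∧
      3 ^ 5 * ((q : ℝ) - 49 * Real.sqrt q - 160) ≤
        (∑ γ ∈ univ \ ({0, 1, -1, ζ, -ζ} : Finset F),
          ∏ α ∈ ({0, 1, -1, ζ, -ζ} : Finset F),
            (3 - χ (γ - α) - χ ((γ - α) ^ 2) - χ ((γ - α) ^ 3))).re := by
  have h1 : (-1 : F) ≠ 1 := Ring.neg_one_ne_one_of_char_ne_two fun h => by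
    have := FiniteField.even_card_of_char_two h
    omega
  have h0 : ζ ≠ 0 := by rintro rfl; simp at hζ
  have hζ1 : ζ ≠ 1 := by rintro rfl; exact h1 (by simpa using hζ.symm)
  have hζ2 : ζ ≠ -1 := by rintro rfl; exact h1 (by simpa using hζ.symm)
  have hζ3 : ζ ≠ -ζ := fun h => h1 (mul_left_cancel₀ h0 (by rw [mul_neg_one, ← h, mul_one]))
  have hT : #({0, 1, -1, ζ, -ζ} : Finset F) = 5 := by
    have h4 : (1 : F) ≠ -ζ := fun h => hζ2 (by rw [h, neg_neg])
    have h5 : (-1 : F) ≠ -ζ := fun h => hζ1 (neg_injective h).symm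
    simp [card_insert_of_notMem, h1.symm, h0, h0.symm, hζ1.symm, hζ2.symm, hζ3, h4, h5]
  generalize ({0, 1, -1, ζ, -ζ} : Finset F) = T at hT ⊢
  have hfactor : ∀ x : F, 3 - χ x - χ (x ^ 2) - χ (x ^ 3) = 3 - ∑ j ∈ Icc 1 3, χ x ^ j :=
    fun x => by
      simp only [sum_Icc_succ_top (show 1 ≤ 3 by norm_num),
        sum_Icc_succ_top (show 1 ≤ 2 by norm_num), Icc_self, sum_singleton, Nat.reduceAdd, map_pow]
      ring
  simp_rw [hfactor]
  constructor
  · choose r hr using exists_ofReal_eq_three_sub_sum_quartic hχ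
    simp_rw [hr]
    rw [← Complex.ofReal_im 0]
    norm_cast
  · have key := norm_sum_sdiff_prod_three_sub_quartic_le hχ T
    have hsum : ∑ A ∈ T.powerset.erase ∅, (((#A : ℝ) - 1) * √q + (#T - #A)) = 49 * √q + 75 := by
      have h2 := add_sum_erase _ (fun A => (((#A : ℝ) - 1) * √q + (#T - #A)))
        (empty_mem_powerset T)
      have h3 := sum_powerset_apply_card (x := T) fun k : ℕ => ((k : ℝ) - 1) * √q + (#T - k)
      rw [h3, hT] at h2
      rw [hT, eq_sub_of_add_eq' h2]
      simp [sum_range_succ, Nat.choose]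
      ring
    rw [hF, hsum, hT] at key
    have h2 := (Complex.abs_re_le_norm _).trans key
    have h3 : (3 ^ 5 * ((q : ℂ) - (5 : ℕ))) = ((3 ^ 5 * ((q : ℝ) - 5) : ℝ) : ℂ) := by push_cast; rfl
    rw [h3, Complex.sub_re, Complex.ofReal_re] at h2
    have h4 := (abs_le.1 h2).1
    linarith
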